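/- Fix α_x ≥ 0, α_p > 0, γ > 0, σ_ε > 0 and set α_z = α_x²/(γ²·σ_ε²). There exists M > 0 such that for every σ_μ > M, setting α = α_x + α_p + α_z and α_ψ = α²/(α_x + α_p²·σ_μ²), for every Z ∈ ℝ, x_c ∈ ℝ and m ∈ ℝ the equation Φ(√α_ψ·(((α_z + α_p)/α)·θ − (α_z/α)·Z − (α_p/α)·m − x_c/√α)) = θ has exactly one real solution θ*, and θ* ∈ (0,1). -/

import Mathlib

/-- The standard normal cumulative distribution function. -/
noncomputable def stdNormalCDF (x : ℝ) : ℝ :=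
  ∫ t in Set.Iic x, (Real.sqrt (2 * Real.pi))⁻¹ * Real.exp (-t ^ 2 / 2)

/-!
The equation reads `Φ (s * θ + b) = θ`, where only the intercept `b` depends on `Z`, `x_c` and `m`.
The slope `s = √α_ψ (α_z + α_p) / α` equals `(α_z + α_p) / √(α_x + α_p² σ_μ²)` and tends to `0` as
`σ_μ → ∞`. Since `Φ` is Lipschitz with constant `1 / √(2π)`, the left-hand side is a contraction as
soon as `|s| < √(2π)`, and the Banach fixed point theorem gives exactly one solution, which lies in
the range of `Φ`.
-/

open Filter MeasureTheory ProbabilityTheory Set Topology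
open scoped NNReal

theorem contractingWith_comp_smul_add {𝕜 E : Type*} [NormedField 𝕜] [NormedAddCommGroup E]
    [NormedSpace 𝕜 E] {f : E → E} {K : ℝ≥0} (hf : LipschitzWith K f) {s : 𝕜}
    (hs : K * ‖s‖₊ < 1) (b : E) :
    ContractingWith (K * ‖s‖₊) fun x ↦ f (s • x + b) := by
  have affine_lipschitz : LipschitzWith ‖s‖₊ fun x : E ↦ s • x + b := by
    simpa only [one_mul, Function.comp_def] using
      (isometry_add_right b).lipschitz.comp (lipschitzWith_smul s)
  exact ⟨hs, hf.comp affine_lipschitz⟩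

theorem lipschitzWith_setIntegral_Iic {E : Type*} [NormedAddCommGroup E] [NormedSpace ℝ E]
    {f : ℝ → E} (hf : ∀ x, IntegrableOn f (Iic x)) {C : ℝ≥0} (hC : ∀ t, ‖f t‖ ≤ C) :
    LipschitzWith C fun x ↦ ∫ t in Iic x, f t := by
  refine LipschitzWith.of_dist_le_mul fun x y ↦ ?_
  rw [dist_eq_norm, intervalIntegral.integral_Iic_sub_Iic (hf y) (hf x), Real.dist_eq]
  exact intervalIntegral.norm_integral_le_of_norm_le_const fun t _ ↦ hC t

theorem measureReal_Iic_mem_Ioo {X : Type*} [TopologicalSpace X] [LinearOrder X]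
    [OrderTopology X] [NoMinOrder X] [NoMaxOrder X] [MeasurableSpace X] [OpensMeasurableSpace X]
    (μ : Measure X) [IsProbabilityMeasure μ] [μ.IsOpenPosMeasure] (x : X) :
    μ.real (Iic x) ∈ Ioo 0 1 := by
  have Iic_pos : 0 < μ (Iic x) :=
    (Measure.measure_Iio_pos μ x).trans_le (measure_mono Iio_subset_Iic_self)
  have Iic_ne_one : μ (Iic x) ≠ 1 := by
    rw [Ne, ← prob_compl_eq_zero_iff measurableSet_Iic, compl_Iic]
    exact (Measure.measure_Ioi_pos μ x).ne'
  exact ⟨ENNReal.toReal_pos Iic_pos.ne' (measure_ne_top μ _),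
    measureReal_le_one.lt_of_ne fun h ↦ Iic_ne_one ((ENNReal.toReal_eq_one_iff _).mp h)⟩

theorem gaussianPDFReal_le_inv_sqrt (μ : ℝ) (v : ℝ≥0) (x : ℝ) :
    gaussianPDFReal μ v x ≤ (√(2 * Real.pi * v))⁻¹ := by
  refine mul_le_of_le_one_right (by positivity) (Real.exp_le_one_iff.mpr ?_)
  exact div_nonpos_of_nonpos_of_nonneg (neg_nonpos.mpr (sq_nonneg _)) (by positivity)

theorem stdNormalCDF_eq_setIntegral_gaussianPDFReal (x : ℝ) :
    stdNormalCDF x = ∫ t in Iic x, gaussianPDFReal 0 1 t := by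
  simp [stdNormalCDF, gaussianPDFReal]

theorem stdNormalCDF_eq_gaussianReal_real_Iic (x : ℝ) :
    stdNormalCDF x = (gaussianReal 0 1).real (Iic x) := by
  rw [measureReal_def, gaussianReal_apply_eq_integral 0 one_ne_zero, ENNReal.toReal_ofReal
    (integral_nonneg (gaussianPDFReal_nonneg 0 1)), stdNormalCDF_eq_setIntegral_gaussianPDFReal]

theorem stdNormalCDF_mem_Ioo (x : ℝ) : stdNormalCDF x ∈ Ioo 0 1 := by
  have : (gaussianReal 0 1).IsOpenPosMeasure :=
    (gaussianReal_absolutelyContinuous' 0 one_ne_zero).isOpenPosMeasure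
  rw [stdNormalCDF_eq_gaussianReal_real_Iic]
  exact measureReal_Iic_mem_Ioo _ x

theorem lipschitzWith_stdNormalCDF :
    LipschitzWith (NNReal.sqrt (2 * NNReal.pi))⁻¹ stdNormalCDF := by
  rw [funext stdNormalCDF_eq_setIntegral_gaussianPDFReal]
  refine lipschitzWith_setIntegral_Iic
    (fun _ ↦ (integrable_gaussianPDFReal 0 1).integrableOn) fun t ↦ ?_
  rw [Real.norm_of_nonneg (gaussianPDFReal_nonneg 0 1 t)]
  simpa using gaussianPDFReal_le_inv_sqrt 0 1 t

theorem exists_unique_stdNormalCDF_affine_eq {s : ℝ} (hs : |s| < √(2 * Real.pi)) (b : ℝ) :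
    ∃ θ ∈ Ioo (0 : ℝ) 1, stdNormalCDF (s * θ + b) = θ ∧
      ∀ θ', stdNormalCDF (s * θ' + b) = θ' → θ' = θ := by
  have slope_bound : (NNReal.sqrt (2 * NNReal.pi))⁻¹ * ‖s‖₊ < 1 := by
    rw [inv_mul_lt_one₀ (NNReal.sqrt_pos.mpr (mul_pos two_pos NNReal.pi_pos)), ← NNReal.coe_lt_coe]
    simpa using hs
  have contracting := contractingWith_comp_smul_add lipschitzWith_stdNormalCDF slope_bound b
  obtain ⟨θ, hθ⟩ : ∃ θ, stdNormalCDF (s * θ + b) = θ := ⟨_, contracting.fixedPoint_isFixedPt⟩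
  exact ⟨θ, hθ ▸ stdNormalCDF_mem_Ioo (s * θ + b), hθ,
    fun _ hθ' ↦ contracting.fixedPoint_unique' hθ' hθ⟩

theorem tendsto_div_sqrt_add_sq_mul_sq_atTop (k a : ℝ) {b : ℝ} (hb : b ≠ 0) :
    Tendsto (fun σ : ℝ ↦ k / √(a + b ^ 2 * σ ^ 2)) atTop (𝓝 0) := by
  have radicand_atTop : Tendsto (fun σ : ℝ ↦ a + b ^ 2 * σ ^ 2) atTop atTop :=
    tendsto_atTop_add_const_left _ a
      ((tendsto_pow_atTop two_ne_zero).const_mul_atTop (by positivity))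
  exact (Real.tendsto_sqrt_atTop.comp radicand_atTop).const_div_atTop k

theorem sqrt_sq_div_mul_div_self {a : ℝ} (ha : 0 < a) (d k : ℝ) :
    √(a ^ 2 / d) * (k / a) = k / √d := by
  rw [Real.sqrt_div (sq_nonneg a), Real.sqrt_sq ha.le]
  field_simp

theorem stmt_10_general {αx αp αz : ℝ} (hαp : αp ≠ 0) (hα : 0 < αx + αp + αz) :
    ∀ᶠ σμ in atTop,
      ∀ α αψ : ℝ, α = αx + αp + αz → αψ = α ^ 2 / (αx + αp ^ 2 * σμ ^ 2) →
        ∀ Z xc m : ℝ,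
          ∃ θ ∈ Ioo (0 : ℝ) 1,
            stdNormalCDF (√αψ *
              (((αz + αp) / α) * θ - (αz / α) * Z - (αp / α) * m - xc / √α)) = θ ∧
            ∀ θ' : ℝ,
              stdNormalCDF (√αψ *
                (((αz + αp) / α) * θ' - (αz / α) * Z - (αp / α) * m - xc / √α)) = θ' →
              θ' = θ := by
  have slope_tendsto := (tendsto_div_sqrt_add_sq_mul_sq_atTop (αz + αp) αx hαp).abs
  rw [abs_zero] at slope_tendsto
  filter_upwards [slope_tendsto.eventually_lt_const (u := √(2 * Real.pi)) (by positivity)]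
    with σμ slope_lt α αψ α_eq αψ_eq Z xc m
  have slope_eq : √αψ * ((αz + αp) / α) = (αz + αp) / √(αx + αp ^ 2 * σμ ^ 2) :=
    αψ_eq ▸ sqrt_sq_div_mul_div_self (α_eq ▸ hα) _ _
  rw [← slope_eq] at slope_lt
  have index_eq (θ : ℝ) :
      √αψ * (((αz + αp) / α) * θ - (αz / α) * Z - (αp / α) * m - xc / √α) =
        √αψ * ((αz + αp) / α) * θ + √αψ * (-(αz / α) * Z - (αp / α) * m - xc / √α) := by
    ring
  simp only [index_eq]
  exact exists_unique_stdNormalCDF_affine_eq slope_lt _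

theorem stmt_10 (αx αp γ σε : ℝ) (hαx : 0 ≤ αx) (hαp : 0 < αp) (hγ : 0 < γ)
    (hσε : 0 < σε) (αz : ℝ) (hαz : αz = αx ^ 2 / (γ ^ 2 * σε ^ 2)) :
    ∃ M > (0 : ℝ), ∀ σμ > M,
      ∀ α αψ : ℝ, α = αx + αp + αz → αψ = α ^ 2 / (αx + αp ^ 2 * σμ ^ 2) →
        ∀ Z xc m : ℝ,
          ∃ θ ∈ Set.Ioo (0 : ℝ) 1,
            stdNormalCDF (Real.sqrt αψ *
              (((αz + αp) / α) * θ - (αz / α) * Z - (αp / α) * m - xc / Real.sqrt α)) = θ ∧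
            ∀ θ' : ℝ,
              stdNormalCDF (Real.sqrt αψ *
                (((αz + αp) / α) * θ' - (αz / α) * Z - (αp / α) * m -
                  xc / Real.sqrt α)) = θ' →
              θ' = θ := by
  have hα : 0 < αx + αp + αz := by rw [hαz]; positivity
  obtain ⟨M, hM⟩ :=
    ((stmt_10_general hαp.ne' hα).and (eventually_gt_atTop 0)).exists_forall_of_atTop
  exact ⟨M, (hM M le_rfl).2, fun σμ hσμ ↦ (hM σμ hσμ.le).1⟩
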